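/- For every expression E over VASS sections there exists an expression E' with Rel(E') = Rel(E) such that in E' the Kleene star is only applied to subexpressions F whose relation Rel(F) is monotone. -/

import Mathlib

/-- Vectors of naturals of dimension `d`. -/
abbrev NVec (d : ℕ) := Fin d → ℕ

/-- A priority vector addition system with states (PVASS) of dimension `d`:
a finite set of states `Q`, a finite set of edges `E`, each edge having a source,
a target, an update vector in `ℤ^d` and a test level `g(e) ∈ {0,…,d}`. -/
structure PVASS (d : ℕ) where
  Q : Type
  E : Type
  fintypeQ : Fintype Q
  fintypeE : Fintype E
  src : E → Q
  tgt : E → Q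
  upd : E → Fin d → ℤ
  test : E → ℕ
  test_le : ∀ e, test e ≤ d

namespace PVASS

variable {d : ℕ} (V : PVASS d)

/-- The one-step relation of a PVASS: an edge `e` can be taken from `(q,x)` to `(q',x')`
iff `q = src e`, `q' = tgt e`, the first `test e` counters of `x` are zero, and
`x' = x + upd e` (staying nonnegative, which is automatic since `x' ∈ ℕ^d`). -/
def Step (c c' : V.Q × NVec d) : Prop :=
  ∃ e : V.E, V.src e = c.1 ∧ V.tgt e = c'.1 ∧
    (∀ j : Fin d, (j : ℕ) < V.test e → c.2 j = 0) ∧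
    ∀ i : Fin d, (c'.2 i : ℤ) = (c.2 i : ℤ) + V.upd e i

/-- The reachability relation: reflexive transitive closure of the step relation. -/
def Reach : V.Q × NVec d → V.Q × NVec d → Prop := Relation.ReflTransGen V.Step

end PVASS

/-- Embed a pair `(b, x)` with `b ∈ ℕ^{d-d'}` and `x ∈ ℕ^{d'}` into `ℕ^d`:
the first `d - d'` coordinates form `b`, the last `d'` coordinates form `x`. -/
def fitVec {d d' : ℕ} (h : d' ≤ d) (b : Fin (d - d') → ℕ) (x : Fin d' → ℕ) : NVec d :=
  fun i => Fin.append b x (Fin.cast (Nat.sub_add_cancel h).symm i)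

/-- `X ⊆ ℕ^{d'} × ℕ^{d''}` is a PVASS section. -/
def IsPVASSSection {d' d'' : ℕ} (X : Set (NVec d' × NVec d'')) : Prop :=
  ∃ (d : ℕ) (h' : d' ≤ d) (h'' : d'' ≤ d) (V : PVASS d) (p q : V.Q)
    (bs : Fin (d - d') → ℕ) (bt : Fin (d - d'') → ℕ),
    X = {xy | V.Reach (p, fitVec h' bs xy.1) (q, fitVec h'' bt xy.2)}

/-- `X ⊆ ℕ^{d'} × ℕ^{d''}` is a VASS section: a section of a PVASS in which no
counter is ever tested for zero. -/
def IsVASSSection {d' d'' : ℕ} (X : Set (NVec d' × NVec d'')) : Prop :=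
  ∃ (d : ℕ) (h' : d' ≤ d) (h'' : d'' ≤ d) (V : PVASS d) (_ : ∀ e, V.test e = 0)
    (p q : V.Q) (bs : Fin (d - d') → ℕ) (bt : Fin (d - d'') → ℕ),
    X = {xy | V.Reach (p, fitVec h' bs xy.1) (q, fitVec h'' bt xy.2)}

/-- Composition of relations. -/
def RelComp {α β γ : Type*} (R : Set (α × β)) (S : Set (β × γ)) : Set (α × γ) :=
  {p | ∃ x, (p.1, x) ∈ R ∧ (x, p.2) ∈ S}

/-- Reflexive transitive closure of a relation, viewed as a set of pairs. -/
def RelStar {α : Type*} (R : Set (α × α)) : Set (α × α) :=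
  {p | Relation.ReflTransGen (fun a b => (a, b) ∈ R) p.1 p.2}

/-- Regular expressions over VASS sections: leaves are VASS sections, and we can
compose (with matching intermediate dimension), take unions (with matching dimensions),
and take Kleene star (only when input and output dimensions agree). -/
inductive Expr : ℕ → ℕ → Type 1 where
  | leaf {a b : ℕ} (Y : Set (NVec a × NVec b)) (hY : IsVASSSection Y) : Expr a b
  | comp {a m b : ℕ} : Expr a m → Expr m b → Expr a b
  | union {a b : ℕ} : Expr a b → Expr a b → Expr a b
  | star {a : ℕ} : Expr a a → Expr a a

/-- The relation denoted by an expression. -/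
def Expr.Rel : ∀ {a b : ℕ}, Expr a b → Set (NVec a × NVec b)
  | _, _, .leaf Y _ => Y
  | _, _, .comp E₁ E₂ => RelComp E₁.Rel E₂.Rel
  | _, _, .union E₁ E₂ => E₁.Rel ∪ E₂.Rel
  | _, _, .star E => RelStar E.Rel

/-- Add `1` to the coordinate `j` of a vector. -/
def addU {n : ℕ} (x : NVec n) (j : Fin n) : NVec n :=
  fun i => if i = j then x i + 1 else x i

/-- A relation `R ⊆ ℕ^a × ℕ^a` is monotone: for every `(x,y) ∈ R` and every coordinate
`j`, also `(x + e_j, y + e_j) ∈ R`. -/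
def MonotoneRel {a : ℕ} (R : Set (NVec a × NVec a)) : Prop :=
  ∀ p ∈ R, ∀ j : Fin a, (addU p.1 j, addU p.2 j) ∈ R

/-- In this expression, the Kleene star is only applied to subexpressions whose
denoted relation is monotone. -/
def Expr.StarOnMonotone : ∀ {a b : ℕ}, Expr a b → Prop
  | _, _, .leaf _ _ => True
  | _, _, .comp E₁ E₂ => E₁.StarOnMonotone ∧ E₂.StarOnMonotone
  | _, _, .union E₁ E₂ => E₁.StarOnMonotone ∧ E₂.StarOnMonotone
  | _, _, .star E => E.StarOnMonotone ∧ MonotoneRel E.Rel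

/-! A VASS section is preserved by adding the same increment to input and output coordinates that
have the same position counted from the end, and a section between `ℕ^a` and `ℕ^b` has `min a b`
such positions. A composition is as monotone as its narrowest intermediate dimension, so a star-free
expression denotes a finite union of compositions `A ∘ B` through some `ℕ^m`, with `A` and `B`
monotone in the last `m` coordinates. The Kleene star preserves this form: if `X*` is already
monotone in the last `m` coordinates, then `(AB ∪ X)* = X*A (BX*A)* BX* ∪ X*`, where the new inner
star is applied to a relation on `ℕ^m` that is monotone in all coordinates. The terms of a union are
therefore added in order of decreasing `m`. -/

section RelationAlgebra

variable {α β γ δ : Type*}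

theorem relComp_assoc (R : Set (α × β)) (S : Set (β × γ)) (T : Set (γ × δ)) :
    RelComp (RelComp R S) T = RelComp R (RelComp S T) :=
  SetRel.comp_assoc R S T

theorem id_relComp (R : Set (α × β)) : RelComp SetRel.id R = R :=
  SetRel.id_comp R

theorem relComp_id (R : Set (α × β)) : RelComp R SetRel.id = R :=
  SetRel.comp_id R

theorem empty_relComp (S : Set (β × γ)) : RelComp (∅ : Set (α × β)) S = ∅ :=
  SetRel.empty_comp S

theorem relComp_empty (R : Set (α × β)) : RelComp R (∅ : Set (β × γ)) = ∅ :=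
  SetRel.comp_empty R

theorem union_relComp (R₁ R₂ : Set (α × β)) (S : Set (β × γ)) :
    RelComp (R₁ ∪ R₂) S = RelComp R₁ S ∪ RelComp R₂ S := by
  ext
  simp only [RelComp, Set.mem_union, Set.mem_ofPred_eq, or_and_right, exists_or]

theorem relComp_union (R : Set (α × β)) (S₁ S₂ : Set (β × γ)) :
    RelComp R (S₁ ∪ S₂) = RelComp R S₁ ∪ RelComp R S₂ := by
  ext
  simp only [RelComp, Set.mem_union, Set.mem_ofPred_eq, and_or_left, exists_or]

theorem relStar_empty : RelStar (∅ : Set (α × α)) = SetRel.id := by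
  ext ⟨x, y⟩
  exact (Relation.reflTransGen_iff_eq fun _ => Set.notMem_empty _).trans eq_comm

theorem relStar_subset_of_relComp_subset {R T : Set (α × α)} (hid : SetRel.id ⊆ T)
    (hcomp : RelComp T R ⊆ T) : RelStar R ⊆ T := by
  rintro ⟨x, y⟩ (hxy : Relation.ReflTransGen _ x y)
  induction hxy with
  | refl => exact hid rfl
  | tail _ hR hT => exact hcomp ⟨_, hT, hR⟩

theorem relStar_subset_relStar {R S : Set (α × α)} (h : R ⊆ RelStar S) :
    RelStar R ⊆ RelStar S :=
  relStar_subset_of_relComp_subset (by rintro ⟨x, _⟩ rfl; exact .refl)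
    fun _ ⟨_, hS, hR⟩ => Relation.ReflTransGen.trans hS (h hR)

theorem relStar_union (R S : Set (α × α)) :
    RelStar (R ∪ S) = RelComp (RelStar (RelComp (RelStar R) S)) (RelStar R) := by
  apply Set.Subset.antisymm
  · refine relStar_subset_of_relComp_subset ?_ ?_
    · rintro ⟨x, _⟩ rfl
      exact ⟨x, .refl, .refl⟩
    · rintro ⟨x, y⟩ ⟨v, ⟨u, hxu, huv⟩, hR | hS⟩
      · exact ⟨u, hxu, .tail huv hR⟩
      · exact ⟨y, .tail hxu ⟨v, huv, hS⟩, .refl⟩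
  · have hR : RelStar R ⊆ RelStar (R ∪ S) :=
      relStar_subset_relStar fun _ h => .single (Or.inl h)
    have hRS : RelStar (RelComp (RelStar R) S) ⊆ RelStar (R ∪ S) :=
      relStar_subset_relStar fun (x, y) ⟨u, hxu, huy⟩ =>
        Relation.ReflTransGen.tail (hR hxu : (x, u) ∈ RelStar (R ∪ S)) (Or.inr huy)
    rintro ⟨x, y⟩ ⟨u, hxu, huy⟩
    exact Relation.ReflTransGen.trans (hRS hxu : (x, u) ∈ RelStar (R ∪ S)) (hR huy)

theorem relStar_relComp (R : Set (α × β)) (S : Set (β × α)) :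
    RelStar (RelComp R S) =
      RelComp (RelComp R (RelStar (RelComp S R))) S ∪ SetRel.id := by
  apply Set.Subset.antisymm
  · refine relStar_subset_of_relComp_subset Set.subset_union_right ?_
    rintro ⟨x, y⟩ ⟨w, ⟨v, ⟨u, hxu, huv⟩, hvw⟩ | rfl, t, hwt, hty⟩
    · exact Or.inl ⟨t, ⟨u, hxu, .tail huv ⟨w, hvw, hwt⟩⟩, hty⟩
    · exact Or.inl ⟨t, ⟨t, hwt, .refl⟩, hty⟩
  · rintro ⟨x, y⟩ (⟨v, ⟨u, hxu, huv⟩, hvy⟩ | rfl)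
    · replace huv : Relation.ReflTransGen _ u v := huv
      induction huv generalizing y with
      | refl => exact .single ⟨u, hxu, hvy⟩
      | tail _ hSR ih =>
        obtain ⟨w, hS, hR⟩ := hSR
        exact .tail (b := w) (ih w hS hxu) ⟨_, hR, hvy⟩
    · exact .refl

theorem relStar_relComp_union (A : Set (α × β)) (B : Set (β × α)) (X : Set (α × α)) :
    RelStar (RelComp A B ∪ X) =
      RelComp (RelComp (RelComp (RelStar X) A) (RelStar (RelComp B (RelComp (RelStar X) A))))
        (RelComp B (RelStar X)) ∪ RelStar X := by
  rw [Set.union_comm, relStar_union, ← relComp_assoc, relStar_relComp, union_relComp,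
    id_relComp, relComp_assoc _ B]

end RelationAlgebra

section TailMonotone

variable {a b c m : ℕ}

/-- Monotonicity in the last `m` coordinates of a relation between vectors of possibly different
dimensions. Coordinates are counted from the end, via `Fin.rev`, because `fitVec` aligns vectors
at their last coordinate. -/
def TailMonotone (m : ℕ) (R : Set (NVec a × NVec b)) : Prop :=
  ∀ ⦃x y⦄, (x, y) ∈ R → ∀ ⦃i : Fin a⦄ ⦃j : Fin b⦄, (i.rev : ℕ) = j.rev → (i.rev : ℕ) < m →
    (addU x i, addU y j) ∈ R

theorem TailMonotone.mono {n : ℕ} {R : Set (NVec a × NVec b)} (hR : TailMonotone m R)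
    (hnm : n ≤ m) : TailMonotone n R :=
  fun _ _ hxy _ _ hij hi => hR hxy hij (hi.trans_le hnm)

theorem TailMonotone.monotoneRel {R : Set (NVec a × NVec a)} (hR : TailMonotone a R) :
    MonotoneRel R :=
  fun _ hxy j => hR hxy rfl j.rev.isLt

theorem TailMonotone.union {R S : Set (NVec a × NVec b)} (hR : TailMonotone m R)
    (hS : TailMonotone m S) : TailMonotone m (R ∪ S) :=
  fun _ _ hxy _ _ hij hi => hxy.imp (hR · hij hi) (hS · hij hi)

theorem TailMonotone.relComp {R : Set (NVec a × NVec b)} {S : Set (NVec b × NVec c)}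
    (hR : TailMonotone m R) (hS : TailMonotone m S) (hm : m ≤ b) :
    TailMonotone m (RelComp R S) := by
  rintro x y ⟨z, hxz, hzy⟩ i j hij hi
  let k : Fin b := (⟨i.rev, hi.trans_le hm⟩ : Fin b).rev
  have hk : (k.rev : ℕ) = i.rev := by rw [Fin.rev_rev]
  exact ⟨addU z k, hR hxz hk.symm hi, hS hzy (hk.trans hij) (hk.trans_lt hi)⟩

theorem TailMonotone.relStar {R : Set (NVec a × NVec a)} (hR : TailMonotone m R) :
    TailMonotone m (RelStar R) := by
  intro x y hxy i j hij hi
  obtain rfl : i = j := Fin.rev_injective (Fin.ext hij)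
  exact Relation.ReflTransGen.lift (addU · i) (fun _ _ h => hR h rfl hi) x y hxy

end TailMonotone

section VASSSections

variable {a b d : ℕ}

theorem fitVec_injective (h : a ≤ d) (v : Fin (d - a) → ℕ) : Function.Injective (fitVec h v) := by
  intro x y hxy
  funext i
  simpa [fitVec] using congrFun hxy (Fin.cast (Nat.sub_add_cancel h) (Fin.natAdd (d - a) i))

theorem fitVec_addU (h : a ≤ d) (v : Fin (d - a) → ℕ) (x : NVec a) {i : Fin a} {k : Fin d}
    (hk : (k.rev : ℕ) = i.rev) : fitVec h v (addU x i) = addU (fitVec h v x) k := by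
  have hk' : (k : ℕ) = d - a + i := by
    simp only [Fin.val_rev] at hk
    omega
  funext l
  obtain ⟨l, rfl⟩ := (finCongr (Nat.sub_add_cancel h)).surjective l
  induction l using Fin.addCases with
  | left l =>
    have hl : (l : ℕ) ≠ k := by omega
    simp [fitVec, addU, Fin.ext_iff, hl]
  | right l => simp [fitVec, addU, Fin.ext_iff, hk']

theorem PVASS.Step.addU_addU {V : PVASS d} (hV : ∀ e, V.test e = 0) {s s' : V.Q × NVec d}
    (h : V.Step s s') (k : Fin d) : V.Step (s.1, addU s.2 k) (s'.1, addU s'.2 k) := by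
  obtain ⟨e, hsrc, htgt, -, hupd⟩ := h
  refine ⟨e, hsrc, htgt, fun j hj => absurd hj (by simp [hV]), fun i => ?_⟩
  have := hupd i
  simp only [addU]
  split_ifs <;> push_cast <;> linarith

theorem PVASS.Reach.addU_addU {V : PVASS d} (hV : ∀ e, V.test e = 0) {s s' : V.Q × NVec d}
    (h : V.Reach s s') (k : Fin d) : V.Reach (s.1, addU s.2 k) (s'.1, addU s'.2 k) :=
  Relation.ReflTransGen.lift (fun s : V.Q × NVec d => (s.1, addU s.2 k))
    (fun _ _ hs => hs.addU_addU hV k) _ _ h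

theorem IsVASSSection.tailMonotone {Y : Set (NVec a × NVec b)} (hY : IsVASSSection Y) (m : ℕ) :
    TailMonotone m Y := by
  obtain ⟨d, ha, hb, V, hV, p, q, bs, bt, rfl⟩ := hY
  intro x y (hxy : V.Reach _ _) i j hij _
  let k : Fin d := (⟨i.rev, i.rev.isLt.trans_le ha⟩ : Fin d).rev
  have hk : (k.rev : ℕ) = i.rev := by rw [Fin.rev_rev]
  change V.Reach (p, fitVec ha bs (addU x i)) (q, fitVec hb bt (addU y j))
  rw [fitVec_addU ha bs x hk, fitVec_addU hb bt y (hk.trans hij)]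
  exact hxy.addU_addU hV k

/-- The VASS with state set `Q` and no edges. Its sections provide the leaves for the identity
and the empty relation. -/
def PVASS.edgeless (d : ℕ) (Q : Type) [Fintype Q] : PVASS d where
  Q := Q
  E := Empty
  fintypeQ := inferInstance
  fintypeE := inferInstance
  src := Empty.elim
  tgt := Empty.elim
  upd := Empty.elim
  test := Empty.elim
  test_le := Empty.rec

theorem PVASS.edgeless_reach_iff {Q : Type} [Fintype Q] {p q : Q} {x y : NVec d} :
    (edgeless d Q).Reach (p, x) (q, y) ↔ p = q ∧ x = y :=
  (Relation.reflTransGen_iff_eq fun _ ⟨e, _⟩ => Empty.elim e).trans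
    (eq_comm.trans Prod.mk_inj)

theorem isVASSSection_id (a : ℕ) : IsVASSSection (SetRel.id : Set (NVec a × NVec a)) := by
  refine ⟨a, le_rfl, le_rfl, PVASS.edgeless a Unit, Empty.rec, (), (), 0, 0, ?_⟩
  ext ⟨x, y⟩
  have hreach := PVASS.edgeless_reach_iff (p := ()) (q := ())
    (x := fitVec le_rfl 0 x) (y := fitVec le_rfl 0 y)
  rw [(fitVec_injective le_rfl 0).eq_iff, eq_self, true_and] at hreach
  exact hreach.symm

theorem isVASSSection_empty (a b : ℕ) : IsVASSSection (∅ : Set (NVec a × NVec b)) := by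
  refine ⟨max a b, le_max_left a b, le_max_right a b, PVASS.edgeless (max a b) Bool, Empty.rec,
    true, false, 0, 0, (Set.eq_empty_of_forall_notMem fun _ h => ?_).symm⟩
  exact Bool.noConfusion (PVASS.edgeless_reach_iff.mp h).1

end VASSSections

section Tame

variable {a b c m n : ℕ}

/-- Relations that are denoted by an expression whose stars are applied to monotone relations
only, and that are themselves monotone in their last `m` coordinates. -/
structure IsTame (m : ℕ) (R : Set (NVec a × NVec b)) : Prop where
  exists_expr : ∃ E : Expr a b, E.Rel = R ∧ E.StarOnMonotone
  tailMonotone : TailMonotone m R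

theorem IsVASSSection.isTame {Y : Set (NVec a × NVec b)} (hY : IsVASSSection Y) (m : ℕ) :
    IsTame m Y :=
  ⟨⟨.leaf Y hY, rfl, trivial⟩, hY.tailMonotone m⟩

theorem IsTame.mono {R : Set (NVec a × NVec b)} (hR : IsTame m R) (hnm : n ≤ m) : IsTame n R :=
  ⟨hR.exists_expr, hR.tailMonotone.mono hnm⟩

theorem IsTame.union {R S : Set (NVec a × NVec b)} (hR : IsTame m R) (hS : IsTame m S) :
    IsTame m (R ∪ S) := by
  obtain ⟨⟨E, rfl, hE⟩, hER⟩ := hR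
  obtain ⟨⟨F, rfl, hF⟩, hFS⟩ := hS
  exact ⟨⟨.union E F, rfl, hE, hF⟩, hER.union hFS⟩

theorem IsTame.relComp {R : Set (NVec a × NVec b)} {S : Set (NVec b × NVec c)}
    (hR : IsTame m R) (hS : IsTame m S) (hm : m ≤ b) : IsTame m (RelComp R S) := by
  obtain ⟨⟨E, rfl, hE⟩, hER⟩ := hR
  obtain ⟨⟨F, rfl, hF⟩, hFS⟩ := hS
  exact ⟨⟨.comp E F, rfl, hE, hF⟩, hER.relComp hFS hm⟩

theorem IsTame.relStar {R : Set (NVec a × NVec a)} (hR : IsTame a R) : IsTame a (RelStar R) := by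
  obtain ⟨⟨E, rfl, hE⟩, hER⟩ := hR
  exact ⟨⟨.star E, rfl, hE, hER.monotoneRel⟩, hER.relStar⟩

/-- Compositions `A ∘ B` of tame relations `A ⊆ ℕ^a × ℕ^m` and `B ⊆ ℕ^m × ℕ^b` that are monotone
in all `m` coordinates of the intermediate vector. -/
def FactorsThrough (m : ℕ) (R : Set (NVec a × NVec b)) : Prop :=
  m ≤ a ∧ m ≤ b ∧ ∃ (A : Set (NVec a × NVec m)) (B : Set (NVec m × NVec b)),
    IsTame m A ∧ IsTame m B ∧ RelComp A B = R

theorem FactorsThrough.isTame {R : Set (NVec a × NVec b)} (hR : FactorsThrough m R) :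
    IsTame m R := by
  obtain ⟨-, -, A, B, hA, hB, rfl⟩ := hR
  exact hA.relComp hB le_rfl

theorem FactorsThrough.relComp {R : Set (NVec a × NVec b)} {S : Set (NVec b × NVec c)}
    (hR : FactorsThrough m R) (hS : FactorsThrough n S) :
    FactorsThrough (min m n) (RelComp R S) := by
  have hR' := hR.isTame
  have hS' := hS.isTame
  obtain ⟨hma, hmb, A, B, hA, hB, rfl⟩ := hR
  obtain ⟨hnb, hnc, C, D, hC, hD, rfl⟩ := hS
  rcases le_total m n with hmn | hnm
  · rw [min_eq_left hmn]
    exact ⟨hma, hmn.trans hnc, A, _, hA, hB.relComp (hS'.mono hmn) hmb,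
      (relComp_assoc A B _).symm⟩
  · rw [min_eq_right hnm]
    exact ⟨hnm.trans hma, hnc, _, D, (hR'.mono hnm).relComp hC hnb, hD, relComp_assoc _ C D⟩

theorem IsVASSSection.factorsThrough {Y : Set (NVec a × NVec b)} (hY : IsVASSSection Y) :
    FactorsThrough (min a b) Y := by
  rcases le_total a b with hab | hba
  · rw [min_eq_left hab]
    exact ⟨le_rfl, hab, _, Y, (isVASSSection_id a).isTame a, hY.isTame a, id_relComp Y⟩
  · rw [min_eq_right hba]
    exact ⟨hba, le_rfl, Y, _, hY.isTame b, (isVASSSection_id b).isTame b, relComp_id Y⟩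

end Tame

section Layered

variable {a b c m n : ℕ}

/-- Finite unions of relations that factor through dimensions at least `n`. The terms are listed
by increasing dimension, so that the induction for the Kleene star adds the term of least
dimension last. -/
inductive IsLayered {a b : ℕ} : ℕ → Set (NVec a × NVec b) → Prop
  | empty (n : ℕ) : IsLayered n ∅
  | cons {n m : ℕ} {S R : Set (NVec a × NVec b)} (hnm : n ≤ m) (hS : FactorsThrough m S)
      (hR : IsLayered m R) : IsLayered n (S ∪ R)

theorem IsLayered.mono {R : Set (NVec a × NVec b)} (hR : IsLayered m R) (hnm : n ≤ m) :
    IsLayered n R := by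
  cases hR with
  | empty => exact .empty n
  | cons hmk hS hR => exact .cons (hnm.trans hmk) hS hR

theorem IsLayered.insert {S R : Set (NVec a × NVec b)} (hS : FactorsThrough m S)
    (hR : IsLayered n R) (hnm : n ≤ m) : IsLayered n (S ∪ R) := by
  induction hR with
  | empty n => exact .cons hnm hS (.empty m)
  | @cons n k T R hnk hT hR ih =>
    rcases le_total m k with hmk | hkm
    · exact .cons hnm hS (.cons hmk hT hR)
    · rw [Set.union_left_comm]
      exact .cons hnk hT (ih hkm)

theorem FactorsThrough.isLayered {R : Set (NVec a × NVec b)} (hR : FactorsThrough m R) :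
    IsLayered m R := by
  simpa using IsLayered.cons le_rfl hR (.empty m)

theorem IsLayered.isTame {R : Set (NVec a × NVec b)} (hR : IsLayered n R) : IsTame n R := by
  induction hR with
  | empty n => exact (isVASSSection_empty a b).isTame n
  | cons hnm hS _ ih => exact (hS.isTame.union ih).mono hnm

theorem IsLayered.union {R S : Set (NVec a × NVec b)} (hR : IsLayered m R) (hS : IsLayered n S) :
    IsLayered (min m n) (R ∪ S) := by
  induction hR with
  | empty m =>
    rw [Set.empty_union]
    exact hS.mono (min_le_right m n)
  | cons hmk hT _ ih =>
    rw [Set.union_assoc]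
    exact .insert hT (ih.mono (min_le_min_right n hmk)) ((min_le_left _ n).trans hmk)

theorem FactorsThrough.relComp_isLayered {R : Set (NVec a × NVec b)}
    {S : Set (NVec b × NVec c)} (hR : FactorsThrough m R) (hS : IsLayered n S) :
    IsLayered (min m n) (RelComp R S) := by
  induction hS with
  | empty n =>
    rw [relComp_empty]
    exact .empty _
  | cons hnk hT _ ih =>
    rw [relComp_union]
    exact .cons (min_le_min_left m hnk) (hR.relComp hT) ih

theorem IsLayered.relComp {R : Set (NVec a × NVec b)} {S : Set (NVec b × NVec c)}
    (hR : IsLayered m R) (hS : IsLayered n S) : IsLayered (min m n) (RelComp R S) := by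
  induction hR with
  | empty m =>
    rw [empty_relComp]
    exact .empty _
  | cons hmk hT _ ih =>
    rw [union_relComp]
    exact ((hT.relComp_isLayered hS).union ih).mono (by simpa using .inl hmk)

theorem IsLayered.relStar {R : Set (NVec a × NVec a)} (hR : IsLayered n R) (hn : n ≤ a) :
    IsLayered n (RelStar R) := by
  induction hR with
  | empty n =>
    rw [relStar_empty]
    exact (isVASSSection_id a).factorsThrough.isLayered.mono (by simpa using hn)
  | @cons n m S R hnm hS _ ih =>
    obtain ⟨hma, -, A, B, hA, hB, rfl⟩ := hS
    have hRstar : IsTame m (RelStar R) := (ih hma).isTame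
    have hRA : IsTame m (RelComp (RelStar R) A) := hRstar.relComp hA hma
    have hBRA : IsTame m (RelStar (RelComp B (RelComp (RelStar R) A))) :=
      (hB.relComp hRA hma).relStar
    rw [relStar_relComp_union]
    exact .cons hnm
      ⟨hma, hma, _, _, hRA.relComp hBRA le_rfl, hB.relComp hRstar hma, rfl⟩ (ih hma)

theorem Expr.isLayered_rel (E : Expr a b) : IsLayered 0 E.Rel := by
  induction E with
  | leaf Y hY => exact hY.factorsThrough.isLayered.mono (Nat.zero_le _)
  | comp E F hE hF => exact hE.relComp hF
  | union E F hE hF => exact hE.union hF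
  | star E hE => exact hE.relStar (Nat.zero_le _)

end Layered

/-- For every expression `E` over VASS sections there is an expression
`E'` with `Rel(E') = Rel(E)` in which the Kleene star is only applied to subexpressions
whose relation is monotone. -/
theorem exists_expr_star_on_monotone {a b : ℕ} (E : Expr a b) :
    ∃ E' : Expr a b, E'.Rel = E.Rel ∧ E'.StarOnMonotone :=
  E.isLayered_rel.isTame.exists_expr
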